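/- arXiv:2101.09610 — 2 statements merged into one kernel-verified Lean document; each statement's English description precedes it below -/
import Mathlib

section
/- Fix real numbers q > 0 and r > 2. With P₁₂(n) = √(1 + q/(π²n^{2+r})) − 1 and P₂₂(n) = √((q/nʳ + 2P₁₂(n))/(n²π²)), both series Σ_{n=1}^∞ nπ P₁₂(n) and Σ_{n=1}^∞ nπ P₂₂(n) converge; consequently, for every x ∈ [0,1] the series defining the optimal feedback gain, K(x) = −Σ_{n=1}^∞ nπ (P₁₂(n), P₂₂(n)) sin(nπx), converges absolutely. -/
/-- `P₁₂(n)` in the Dirichlet boundary control example. -/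
noncomputable def dirP12 (q r : ℝ) (n : ℕ) : ℝ :=
  Real.sqrt (1 + q / (Real.pi ^ 2 * (n : ℝ) ^ ((2 : ℝ) + r))) - 1

/-- `P₂₂(n)` in the Dirichlet boundary control example. -/
noncomputable def dirP22 (q r : ℝ) (n : ℕ) : ℝ :=
  Real.sqrt ((q / (n : ℝ) ^ r + 2 * dirP12 q r n) / ((n : ℝ) ^ 2 * Real.pi ^ 2))

/-!
The inequality `√(1 + t) ≤ 1 + t / 2` gives `nπ P₁₂(n) = O(n^{-1-r})` and `2 P₁₂(n) ≤ q / nʳ`.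
Hence `nπ P₂₂(n) = √(q / nʳ + 2 P₁₂(n)) ≤ √(2q / nʳ) = O(n^{-r/2})`, which is summable because
`r > 2`. Multiplying by the bounded factor `sin (nπx)` preserves absolute convergence.
-/

theorem sqrt_div_rpow (a : ℝ) {x : ℝ} (hx : 0 ≤ x) (s : ℝ) :
    √(a / x ^ s) = √a / x ^ (s / 2) := by
  rw [Real.sqrt_div' _ (Real.rpow_nonneg hx s), Real.sqrt_eq_rpow (x ^ s), ← Real.rpow_mul hx,
    mul_one_div]

theorem summable_norm_mul_of_norm_le {ι R : Type*} [NonUnitalSeminormedRing R] {f g : ι → R}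
    {C : ℝ} (hf : Summable fun i => ‖f i‖) (hg : ∀ i, ‖g i‖ ≤ C) :
    Summable fun i => ‖f i * g i‖ :=
  (hf.mul_right C).of_nonneg_of_le (fun _ => norm_nonneg _) fun i =>
    norm_mul_le_of_le le_rfl (hg i)

section Dirichlet

open Real

theorem natCast_mul_pi_mul_dirP22 (q r : ℝ) {n : ℕ} (hn : n ≠ 0) :
    n * π * dirP22 q r n = √(q / (n : ℝ) ^ r + 2 * dirP12 q r n) := by
  rw [dirP22, ← mul_pow, sqrt_div' _ (by positivity), sqrt_sq (by positivity),
    mul_div_cancel₀ _ (by positivity)]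

variable {q : ℝ}

theorem dirP12_nonneg (hq : 0 ≤ q) (r : ℝ) (n : ℕ) : 0 ≤ dirP12 q r n := by
  have ht : 0 ≤ q / (π ^ 2 * (n : ℝ) ^ (2 + r)) := by positivity
  exact sub_nonneg.2 (one_le_sqrt.2 (le_add_of_nonneg_right ht))

theorem dirP12_le (hq : 0 ≤ q) (r : ℝ) (n : ℕ) :
    dirP12 q r n ≤ q / (π ^ 2 * (n : ℝ) ^ (2 + r)) / 2 := by
  have ht : 0 ≤ q / (π ^ 2 * (n : ℝ) ^ (2 + r)) := by positivity
  exact sub_le_iff_le_add'.2 (sqrt_one_add_le (by linarith))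

theorem natCast_mul_pi_mul_dirP12_le (hq : 0 ≤ q) (r : ℝ) (n : ℕ) :
    n * π * dirP12 q r n ≤ q / (2 * π) * (1 / (n : ℝ) ^ (1 + r)) := by
  rcases n.eq_zero_or_pos with rfl | hn
  · rw [Nat.cast_zero, zero_mul, zero_mul]
    positivity
  have hn' : (0 : ℝ) < n := Nat.cast_pos.2 hn
  have hpow : (n : ℝ) ^ (2 + r) = n * (n : ℝ) ^ (1 + r) := by
    rw [show 2 + r = 1 + (1 + r) by ring, rpow_add hn', rpow_one]
  calc n * π * dirP12 q r n
      ≤ n * π * (q / (π ^ 2 * (n : ℝ) ^ (2 + r)) / 2) := by gcongr; exact dirP12_le hq r n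
    _ = q / (2 * π) * (1 / (n : ℝ) ^ (1 + r)) := by rw [hpow]; field_simp

theorem two_mul_dirP12_le (hq : 0 ≤ q) (r : ℝ) {n : ℕ} (hn : n ≠ 0) :
    2 * dirP12 q r n ≤ q / (n : ℝ) ^ r := by
  have hn' : (1 : ℝ) ≤ n := Nat.one_le_cast.2 (Nat.one_le_iff_ne_zero.2 hn)
  have hpow : (n : ℝ) ^ r ≤ π ^ 2 * (n : ℝ) ^ (2 + r) :=
    calc (n : ℝ) ^ r ≤ (n : ℝ) ^ (2 + r) := rpow_le_rpow_of_exponent_le hn' (by linarith)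
      _ ≤ π ^ 2 * (n : ℝ) ^ (2 + r) :=
        le_mul_of_one_le_left (by positivity) (one_le_pow₀ (by linarith [pi_gt_three]))
  calc 2 * dirP12 q r n ≤ q / (π ^ 2 * (n : ℝ) ^ (2 + r)) := by linarith [dirP12_le hq r n]
    _ ≤ q / (n : ℝ) ^ r := by gcongr

theorem natCast_mul_pi_mul_dirP22_le (hq : 0 ≤ q) (r : ℝ) (n : ℕ) :
    n * π * dirP22 q r n ≤ √(2 * q) * (1 / (n : ℝ) ^ (r / 2)) := by
  rcases eq_or_ne n 0 with rfl | hn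
  · rw [Nat.cast_zero, zero_mul, zero_mul]
    positivity
  calc n * π * dirP22 q r n
      = √(q / (n : ℝ) ^ r + 2 * dirP12 q r n) := natCast_mul_pi_mul_dirP22 q r hn
    _ ≤ √(2 * q / (n : ℝ) ^ r) := by
        rw [mul_div_assoc, two_mul (q / _)]
        gcongr
        exact two_mul_dirP12_le hq r hn
    _ = √(2 * q) * (1 / (n : ℝ) ^ (r / 2)) := by
        rw [sqrt_div_rpow _ n.cast_nonneg, mul_one_div]

variable {r : ℝ}

theorem summable_natCast_mul_pi_mul_dirP12 (hq : 0 ≤ q) (hr : 0 < r) :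
    Summable fun n : ℕ => n * π * dirP12 q r n :=
  ((summable_one_div_nat_rpow.2 (by linarith)).mul_left _).of_nonneg_of_le
    (fun n => mul_nonneg (by positivity) (dirP12_nonneg hq r n))
    (natCast_mul_pi_mul_dirP12_le hq r)

theorem summable_natCast_mul_pi_mul_dirP22 (hq : 0 ≤ q) (hr : 2 < r) :
    Summable fun n : ℕ => n * π * dirP22 q r n :=
  ((summable_one_div_nat_rpow.2 (by linarith)).mul_left _).of_nonneg_of_le
    (fun _ => mul_nonneg (by positivity) (sqrt_nonneg _))
    (natCast_mul_pi_mul_dirP22_le hq r)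

theorem dirichlet_example_feedback_converges_general (hq : 0 ≤ q) (hr : 2 < r) :
    Summable (fun n : ℕ => ((n : ℝ) + 1) * π * dirP12 q r (n + 1)) ∧
    Summable (fun n : ℕ => ((n : ℝ) + 1) * π * dirP22 q r (n + 1)) ∧
    ∀ x : ℝ,
      Summable (fun n : ℕ =>
        |((n : ℝ) + 1) * π * dirP12 q r (n + 1) * sin (((n : ℝ) + 1) * π * x)|) ∧
      Summable (fun n : ℕ =>
        |((n : ℝ) + 1) * π * dirP22 q r (n + 1) * sin (((n : ℝ) + 1) * π * x)|) := by
  have h₁₂ : Summable fun n : ℕ => ((n : ℝ) + 1) * π * dirP12 q r (n + 1) := by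
    exact_mod_cast (summable_nat_add_iff 1).2
      (summable_natCast_mul_pi_mul_dirP12 hq (by linarith : 0 < r))
  have h₂₂ : Summable fun n : ℕ => ((n : ℝ) + 1) * π * dirP22 q r (n + 1) := by
    exact_mod_cast (summable_nat_add_iff 1).2 (summable_natCast_mul_pi_mul_dirP22 hq hr)
  exact ⟨h₁₂, h₂₂, fun x =>
    ⟨summable_norm_mul_of_norm_le h₁₂.norm fun _ => abs_sin_le_one _,
      summable_norm_mul_of_norm_le h₂₂.norm fun _ => abs_sin_le_one _⟩⟩

end Dirichlet

/-- In the Dirichlet example with `r > 2`, both series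
`Σ_{n≥1} nπ P₁₂(n)` and `Σ_{n≥1} nπ P₂₂(n)` converge; consequently for every
`x ∈ [0,1]` the series defining the optimal feedback gain
`K(x) = −Σ_{n≥1} nπ (P₁₂(n), P₂₂(n)) sin(nπx)` converges absolutely. -/
theorem dirichlet_example_feedback_converges (q r : ℝ) (hq : 0 < q) (hr : 2 < r) :
    Summable (fun n : ℕ => ((n : ℝ) + 1) * Real.pi * dirP12 q r (n + 1)) ∧
    Summable (fun n : ℕ => ((n : ℝ) + 1) * Real.pi * dirP22 q r (n + 1)) ∧
    ∀ x ∈ Set.Icc (0 : ℝ) 1,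
      Summable (fun n : ℕ =>
        |((n : ℝ) + 1) * Real.pi * dirP12 q r (n + 1) *
          Real.sin (((n : ℝ) + 1) * Real.pi * x)|) ∧
      Summable (fun n : ℕ =>
        |((n : ℝ) + 1) * Real.pi * dirP22 q r (n + 1) *
          Real.sin (((n : ℝ) + 1) * Real.pi * x)|) := by
  obtain ⟨h₁₂, h₂₂, hsin⟩ := dirichlet_example_feedback_converges_general hq.le hr
  exact ⟨h₁₂, h₂₂, fun x _ => hsin x⟩
end

section
/- Fix a real number q > 0 and set P₁₂(n) = √(n⁴π⁴ + q/nʳ) − n²π², P₂₂(n) = √(q/nʳ + 2P₁₂(n)), and P₁₁(n) = (n²π² + P₁₂(n))P₂₂(n) for integers n ≥ 1. (a) If r > 6, then the series Σ_{n=1}^∞ P₁₁(n) converges, so for every (x₁,x₂) ∈ [0,1]² the series Σ_{n=1}^∞ P₁₁(n) cos(nπx₁) cos(nπx₂) defining the (1,1)-entry of the optimal-cost kernel converges absolutely. (b) If r > 2, then the series Σ_{n=1}^∞ P₁₂(n) and Σ_{n=1}^∞ P₂₂(n) converge, so for every x ∈ [0,1] the series defining the optimal feedback gain, K(x) = −Σ_{n=1}^∞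 (P₁₂(n), P₂₂(n)) cos(nπx), converges absolutely. -/
/-- `P₁₂(n)` in the Neumann boundary control example. -/
noncomputable def neuP12 (q r : ℝ) (n : ℕ) : ℝ :=
  Real.sqrt ((n : ℝ) ^ 4 * Real.pi ^ 4 + q / (n : ℝ) ^ r) - (n : ℝ) ^ 2 * Real.pi ^ 2

/-- `P₂₂(n)` in the Neumann boundary control example. -/
noncomputable def neuP22 (q r : ℝ) (n : ℕ) : ℝ :=
  Real.sqrt (q / (n : ℝ) ^ r + 2 * neuP12 q r n)

/-- `P₁₁(n)` in the Neumann boundary control example. -/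
noncomputable def neuP11 (q r : ℝ) (n : ℕ) : ℝ :=
  ((n : ℝ) ^ 2 * Real.pi ^ 2 + neuP12 q r n) * neuP22 q r n

/-!
By the tangent-line bound for the square root, `P₁₂(n) = O(n ^ (-(r + 2)))`. Hence the weight
`q / nʳ` dominates the radicand of `P₂₂(n)`, so that `P₂₂(n) = O(n ^ (-r / 2))`, and the factor
`n² π²` costs two powers in `P₁₁(n) = O(n ^ (2 - r / 2))`. Comparison with `p`-series gives the
thresholds.
-/

open Filter Asymptotics

theorem sqrt_sq_add_sub_le {a e : ℝ} (ha : 0 < a) (he : 0 ≤ a ^ 2 + e) :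
    √(a ^ 2 + e) - a ≤ e / (2 * a) := by
  rw [le_div_iff₀ (by positivity)]
  linarith [Real.sq_sqrt he, sq_nonneg (√(a ^ 2 + e) - a)]

theorem isBigO_natCast_rpow_of_le {s t : ℝ} (hst : s ≤ t) :
    (fun n : ℕ => (n : ℝ) ^ s) =O[atTop] fun n : ℕ => (n : ℝ) ^ t := by
  refine IsBigO.of_norm_eventuallyLE ?_
  filter_upwards [eventually_ge_atTop 1] with n hn
  rw [Real.norm_of_nonneg (by positivity)]
  exact Real.rpow_le_rpow_of_exponent_le (mod_cast hn) hst

theorem summable_nat_succ_of_isBigO_rpow {f : ℕ → ℝ} {s : ℝ} (hs : s < -1)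
    (hf : f =O[atTop] fun n : ℕ => (n : ℝ) ^ s) : Summable fun n => f (n + 1) :=
  (summable_nat_add_iff 1).2 (summable_of_isBigO_nat (Real.summable_nat_rpow.2 hs) hf)

theorem summable_abs_mul_cos {ι : Type*} {f : ι → ℝ} (hf : Summable f) (θ : ι → ℝ) :
    Summable fun i => |f i * Real.cos (θ i)| := by
  refine hf.abs.of_nonneg_of_le (fun _ => abs_nonneg _) fun i => ?_
  rw [abs_mul]
  exact mul_le_of_le_one_right (abs_nonneg _) (Real.abs_cos_le_one _)

section Asymptotics

variable {q r : ℝ}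

theorem neuP12_nonneg (hq : 0 ≤ q) (n : ℕ) : 0 ≤ neuP12 q r n := by
  have he : 0 ≤ q / (n : ℝ) ^ r := by positivity
  exact sub_nonneg.2 (Real.le_sqrt_of_sq_le (by linarith))

theorem neuP12_le (hq : 0 ≤ q) {n : ℕ} (hn : 0 < n) :
    neuP12 q r n ≤ q / (n : ℝ) ^ r / (2 * ((n : ℝ) ^ 2 * Real.pi ^ 2)) := by
  have hsq : (n : ℝ) ^ 4 * Real.pi ^ 4 = ((n : ℝ) ^ 2 * Real.pi ^ 2) ^ 2 := by ring
  rw [neuP12, hsq]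
  exact sqrt_sq_add_sub_le (by positivity) (by positivity)

theorem neuP12_isBigO (hq : 0 ≤ q) :
    neuP12 q r =O[atTop] fun n : ℕ => (n : ℝ) ^ (-(r + 2)) := by
  refine IsBigO.of_bound (q / (2 * Real.pi ^ 2)) ?_
  filter_upwards [eventually_gt_atTop 0] with n hn
  have hpos : (0 : ℝ) < n := mod_cast hn
  rw [Real.norm_of_nonneg (neuP12_nonneg hq n), Real.norm_of_nonneg (by positivity)]
  calc neuP12 q r n ≤ q / (n : ℝ) ^ r / (2 * ((n : ℝ) ^ 2 * Real.pi ^ 2)) := neuP12_le hq hn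
    _ = q / (2 * Real.pi ^ 2) * (n : ℝ) ^ (-(r + 2)) := by
      rw [Real.rpow_neg hpos.le, Real.rpow_add hpos, Real.rpow_two]
      field_simp

theorem neuP22_isBigO (hq : 0 ≤ q) :
    neuP22 q r =O[atTop] fun n : ℕ => (n : ℝ) ^ (-r / 2) := by
  have hweight : (fun n : ℕ => q / (n : ℝ) ^ r) =O[atTop] fun n : ℕ => (n : ℝ) ^ (-r) := by
    simp only [div_eq_mul_inv, ← Real.rpow_neg (Nat.cast_nonneg _)]
    exact isBigO_const_mul_self q _ _
  have hP12 : neuP12 q r =O[atTop] fun n : ℕ => (n : ℝ) ^ (-r) :=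
    (neuP12_isBigO hq).trans (isBigO_natCast_rpow_of_le (by linarith))
  have hsqrt (n : ℕ) : √((n : ℝ) ^ (-r)) = (n : ℝ) ^ (-r / 2) := by
    rw [Real.sqrt_eq_rpow, ← Real.rpow_mul n.cast_nonneg, mul_one_div]
  exact ((hweight.add (hP12.const_mul_left 2)).sqrt (.of_forall fun n => by positivity)).congr
    (fun _ => rfl) hsqrt

theorem neuP11_isBigO (hq : 0 ≤ q) (hr : -4 ≤ r) :
    neuP11 q r =O[atTop] fun n : ℕ => (n : ℝ) ^ (2 - r / 2) := by
  have hsq : (fun n : ℕ => (n : ℝ) ^ 2 * Real.pi ^ 2) =O[atTop] fun n : ℕ => (n : ℝ) ^ (2 : ℝ) := by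
    simp only [Real.rpow_two, mul_comm _ (Real.pi ^ 2)]
    exact isBigO_const_mul_self _ _ _
  have hP12 : neuP12 q r =O[atTop] fun n : ℕ => (n : ℝ) ^ (2 : ℝ) :=
    (neuP12_isBigO hq).trans (isBigO_natCast_rpow_of_le (by linarith))
  refine ((hsq.add hP12).mul (neuP22_isBigO hq)).congr' .rfl ?_
  filter_upwards [eventually_gt_atTop 0] with n hn
  rw [← Real.rpow_add (mod_cast hn), neg_div, ← sub_eq_add_neg]

end Asymptotics

theorem neumann_example_series_converge_general {q : ℝ} (hq : 0 ≤ q) (r : ℝ) :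
    (6 < r →
      Summable (fun n : ℕ => neuP11 q r (n + 1)) ∧
      ∀ x₁ x₂ : ℝ, Summable (fun n : ℕ =>
        |neuP11 q r (n + 1) * Real.cos (((n : ℝ) + 1) * Real.pi * x₁) *
          Real.cos (((n : ℝ) + 1) * Real.pi * x₂)|)) ∧
    (-1 < r →
      Summable (fun n : ℕ => neuP12 q r (n + 1)) ∧
      ∀ x : ℝ, Summable (fun n : ℕ =>
        |neuP12 q r (n + 1) * Real.cos (((n : ℝ) + 1) * Real.pi * x)|)) ∧
    (2 < r →
      Summable (fun n : ℕ => neuP22 q r (n + 1)) ∧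
      ∀ x : ℝ, Summable (fun n : ℕ =>
        |neuP22 q r (n + 1) * Real.cos (((n : ℝ) + 1) * Real.pi * x)|)) := by
  refine ⟨fun hr => ?_, fun hr => ?_, fun hr => ?_⟩
  · have h₁₁ : Summable fun n : ℕ => neuP11 q r (n + 1) :=
      summable_nat_succ_of_isBigO_rpow (by linarith) (neuP11_isBigO hq (by linarith))
    exact ⟨h₁₁, fun x₁ x₂ => summable_abs_mul_cos (summable_abs_mul_cos h₁₁ _).of_abs _⟩
  · have h₁₂ : Summable fun n : ℕ => neuP12 q r (n + 1) :=
      summable_nat_succ_of_isBigO_rpow (by linarith) (neuP12_isBigO hq)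
    exact ⟨h₁₂, fun x => summable_abs_mul_cos h₁₂ _⟩
  · have h₂₂ : Summable fun n : ℕ => neuP22 q r (n + 1) :=
      summable_nat_succ_of_isBigO_rpow (by linarith) (neuP22_isBigO hq)
    exact ⟨h₂₂, fun x => summable_abs_mul_cos h₂₂ _⟩

/-- In the Neumann example: (a) if `r > 6` the series
`Σ_{n≥1} P₁₁(n)` converges, so the series for the (1,1)-entry of the
optimal-cost kernel `Σ_{n≥1} P₁₁(n) cos(nπx₁) cos(nπx₂)` converges absolutely
on `[0,1]²`; (b) if `r > 2` the series `Σ_{n≥1} P₁₂(n)` and `Σ_{n≥1} P₂₂(n)`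
converge, so the series for the optimal feedback gain
`K(x) = −Σ_{n≥1} (P₁₂(n), P₂₂(n)) cos(nπx)` converges absolutely on `[0,1]`. -/
theorem neumann_example_series_converge (q : ℝ) (hq : 0 < q) (r : ℝ) :
    (6 < r →
      Summable (fun n : ℕ => neuP11 q r (n + 1)) ∧
      ∀ x₁ ∈ Set.Icc (0 : ℝ) 1, ∀ x₂ ∈ Set.Icc (0 : ℝ) 1,
        Summable (fun n : ℕ =>
          |neuP11 q r (n + 1) * Real.cos (((n : ℝ) + 1) * Real.pi * x₁) *
            Real.cos (((n : ℝ) + 1) * Real.pi * x₂)|)) ∧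
    (2 < r →
      Summable (fun n : ℕ => neuP12 q r (n + 1)) ∧
      Summable (fun n : ℕ => neuP22 q r (n + 1)) ∧
      ∀ x ∈ Set.Icc (0 : ℝ) 1,
        Summable (fun n : ℕ =>
          |neuP12 q r (n + 1) * Real.cos (((n : ℝ) + 1) * Real.pi * x)|) ∧
        Summable (fun n : ℕ =>
          |neuP22 q r (n + 1) * Real.cos (((n : ℝ) + 1) * Real.pi * x)|)) := by
  obtain ⟨h₁₁, h₁₂, h₂₂⟩ := neumann_example_series_converge_general hq.le r
  exact ⟨fun hr => (h₁₁ hr).imp_right fun h x₁ _ x₂ _ => h x₁ x₂, fun hr =>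
    ⟨(h₁₂ (by linarith)).1, (h₂₂ hr).1, fun x _ => ⟨(h₁₂ (by linarith)).2 x, (h₂₂ hr).2 x⟩⟩⟩
end
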